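/- Let d and n be natural numbers, λ > 0 a real number, Φ a real d×n matrix, φ₀ ∈ ℝ^d, and θ ∈ ℝ^d. Define K = ΦᵀΦ, k = Φᵀφ₀, and σ = sqrt(φ₀ᵀφ₀ − kᵀ(K + λI)⁻¹k). Then |kᵀ(K + λI)⁻¹Φᵀθ − φ₀ᵀθ| ≤ ‖θ‖ · σ, where ‖θ‖ is the Euclidean norm. -/

import Mathlib

open Matrix

theorem isUnit_det_gram_add_smul_one {m n : Type*} [Fintype m] [Fintype n] [DecidableEq n]
    (Φ : Matrix m n ℝ) {lam : ℝ} (hlam : 0 < lam) :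
    IsUnit (Φᵀ * Φ + lam • (1 : Matrix n n ℝ)).det := by
  have hgram : (Φᵀ * Φ).PosSemidef := by
    simpa using Matrix.posSemidef_conjTranspose_mul_self Φ
  exact (Matrix.isUnit_iff_isUnit_det _).mp
    (Matrix.PosDef.posSemidef_add hgram (Matrix.PosDef.one.smul hlam)).isUnit

theorem abs_dotProduct_le_norm_mul_sqrt {m : Type*} [Fintype m] (r θ : m → ℝ) :
    |r ⬝ᵥ θ| ≤ ‖(WithLp.equiv 2 (m → ℝ)).symm θ‖ * Real.sqrt (r ⬝ᵥ r) := by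
  have h := abs_real_inner_le_norm (WithLp.toLp 2 θ) (WithLp.toLp 2 r)
  have hr : ‖WithLp.toLp 2 r‖ = Real.sqrt (r ⬝ᵥ r) := by
    simp [EuclideanSpace.norm_eq, dotProduct, pow_two]
  rw [hr, EuclideanSpace.inner_toLp_toLp] at h
  simpa using h

/-- Deterministic (bias) part of the confidence bound of the paper's Theorem 1, in a
finite-dimensional feature space: the noiseless kernel ridge prediction
`kᵀ(K + λI)⁻¹Φᵀθ` deviates from the true value `φ₀ᵀθ` by at most `‖θ‖ · σ`, where
`K = ΦᵀΦ`, `k = Φᵀφ₀`, and `σ = sqrt(φ₀ᵀφ₀ − kᵀ(K + λI)⁻¹k)`. -/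
theorem ridge_bias_bound (d n : ℕ) (lam : ℝ) (hlam : 0 < lam)
    (Φ : Matrix (Fin d) (Fin n) ℝ) (φ₀ θ : Fin d → ℝ) :
    |(Φᵀ.mulVec φ₀) ⬝ᵥ
        ((Φᵀ * Φ + lam • (1 : Matrix (Fin n) (Fin n) ℝ))⁻¹.mulVec (Φᵀ.mulVec θ)) -
      φ₀ ⬝ᵥ θ| ≤
      ‖(WithLp.equiv 2 (Fin d → ℝ)).symm θ‖ *
        Real.sqrt (φ₀ ⬝ᵥ φ₀ -
          (Φᵀ.mulVec φ₀) ⬝ᵥ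
            ((Φᵀ * Φ + lam • (1 : Matrix (Fin n) (Fin n) ℝ))⁻¹.mulVec (Φᵀ.mulVec φ₀))) := by
  -- With `α = (ΦᵀΦ + λI)⁻¹Φᵀφ₀`, the residual `φ₀ - Φα` represents the bias, and its squared
  -- norm falls short of `σ²` by exactly `λ‖α‖²`.
  set A := Φᵀ * Φ + lam • (1 : Matrix (Fin n) (Fin n) ℝ) with hA
  set α := A⁻¹.mulVec (Φᵀ.mulVec φ₀) with hα
  have hsymm : (A⁻¹)ᵀ = A⁻¹ := by
    rw [Matrix.transpose_nonsing_inv]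
    simp [hA]
  have hbias : (Φᵀ.mulVec φ₀) ⬝ᵥ (A⁻¹.mulVec (Φᵀ.mulVec θ)) = Φ.mulVec α ⬝ᵥ θ := by
    rw [dotProduct_mulVec, ← mulVec_transpose, hsymm, ← hα, dotProduct_mulVec, vecMul_transpose]
  have hnormal : Φᵀ.mulVec (Φ.mulVec α) + lam • α = Φᵀ.mulVec φ₀ := by
    have h : A.mulVec α = Φᵀ.mulVec φ₀ := by
      rw [hα, mulVec_mulVec, Matrix.mul_nonsing_inv _ (isUnit_det_gram_add_smul_one Φ hlam),
        one_mulVec]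
    rwa [hA, add_mulVec, smul_mulVec, one_mulVec, ← mulVec_mulVec] at h
  have hcross : (Φᵀ.mulVec φ₀) ⬝ᵥ α = φ₀ ⬝ᵥ Φ.mulVec α := by
    rw [dotProduct_mulVec φ₀, mulVec_transpose]
  have henergy : (Φᵀ.mulVec φ₀) ⬝ᵥ α = Φ.mulVec α ⬝ᵥ Φ.mulVec α + lam * (α ⬝ᵥ α) := by
    rw [← hnormal, add_dotProduct, smul_dotProduct, mulVec_transpose, ← dotProduct_mulVec,
      smul_eq_mul]
  have hresidual : (φ₀ - Φ.mulVec α) ⬝ᵥ (φ₀ - Φ.mulVec α) ≤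
      φ₀ ⬝ᵥ φ₀ - (Φᵀ.mulVec φ₀) ⬝ᵥ α := by
    have hpos : 0 ≤ lam * (α ⬝ᵥ α) :=
      mul_nonneg hlam.le (Finset.sum_nonneg fun i _ => mul_self_nonneg (α i))
    simp only [sub_dotProduct, dotProduct_sub]
    rw [dotProduct_comm (Φ.mulVec α) φ₀]
    linarith
  rw [hbias, ← sub_dotProduct, ← neg_sub, neg_dotProduct, abs_neg]
  exact (abs_dotProduct_le_norm_mul_sqrt _ θ).trans
    (mul_le_mul_of_nonneg_left (Real.sqrt_le_sqrt hresidual) (norm_nonneg _))
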